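/- arXiv:1004.4980 — 3 statements merged into one kernel-verified Lean document; each statement's English description precedes it below -/
import Mathlib

section
/- Let G be a graph and let A₀, B₀ be disjoint nonempty subsets of the vertex set such that for every a∈A₀ and b∈B₀ the pair {a,b} is an edge of G and moreover a right edge of G. Then for every k≥1, every basic k-cover α of G is constant on A₀ and constant on B₀. -/
/-- A `k`-cover of a graph `G`. -/
def IsCover {n : ℕ} (G : SimpleGraph (Fin n)) (k : ℕ) (α : Fin n → ℕ) : Prop :=
  ∀ ⦃i j : Fin n⦄, G.Adj i j → k ≤ α i + α j

/-- A basic `k`-cover. -/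
def IsBasicCover {n : ℕ} (G : SimpleGraph (Fin n)) (k : ℕ) (α : Fin n → ℕ) : Prop :=
  IsCover G k α ∧ ∀ β : Fin n → ℕ, β ≤ α → IsCover G k β → β = α

/-- `{i,j}` is a right edge of `G`: it is an edge, and whenever `{i,i'}` and `{j,j'}` are
edges, so is `{i',j'}`. -/
def IsRightEdge {n : ℕ} (G : SimpleGraph (Fin n)) (i j : Fin n) : Prop :=
  G.Adj i j ∧ ∀ i' j' : Fin n, G.Adj i i' → G.Adj j j' → G.Adj i' j'

/-!
In a basic `k`-cover `α` every vertex of positive value lies on an edge of total value exactly `k`,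
as otherwise its value could be lowered; in particular all values are at most `k`. Let `{i, j}` be
a right edge. If `α i` or `α j` is zero, then `α i + α j ≤ k`. Otherwise pick edges `{i, i'}` and
`{j, j'}` of total value `k`: since `{i', j'}` is an edge, `k ≤ α i' + α j' = 2 * k - (α i + α j)`.
Hence `α i + α j = k`, so that `α i` is determined by `α j`.
-/

section

variable {n : ℕ} {G : SimpleGraph (Fin n)} {k : ℕ} {α : Fin n → ℕ} {i i' j : Fin n}

theorem IsRightEdge.symm (hij : IsRightEdge G i j) : IsRightEdge G j i :=
  ⟨hij.1.symm, fun _ _ hj hi => (hij.2 _ _ hi hj).symm⟩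

theorem IsCover.update {c : ℕ} (hα : IsCover G k α) (hc : ∀ j, G.Adj i j → k ≤ c + α j) :
    IsCover G k (Function.update α i c) := by
  intro x y hxy
  rcases eq_or_ne x i with rfl | hx
  · rw [Function.update_self, Function.update_of_ne hxy.ne']
    exact hc y hxy
  · rcases eq_or_ne y i with rfl | hy
    · rw [Function.update_self, Function.update_of_ne hx, add_comm]
      exact hc x hxy.symm
    · rw [Function.update_of_ne hx, Function.update_of_ne hy]
      exact hα hxy

namespace IsBasicCover

theorem exists_adj_add_eq (hα : IsBasicCover G k α) (hi : 0 < α i) :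
    ∃ j, G.Adj i j ∧ α i + α j = k := by
  by_contra! hne
  have hslack : ∀ j, G.Adj i j → k ≤ α i - 1 + α j := fun j hij => by
    have hlt : k < α i + α j := (hα.1 hij).lt_of_ne (hne j hij).symm
    omega
  have hfix : Function.update α i (α i - 1) = α :=
    hα.2 _ (update_le_self_iff.2 (Nat.sub_le _ _)) (hα.1.update hslack)
  have hpred : α i - 1 = α i := Function.update_eq_self_iff.1 hfix
  omega

theorem apply_le (hα : IsBasicCover G k α) (i : Fin n) : α i ≤ k := by
  rcases (α i).eq_zero_or_pos with hi | hi
  · exact hi.le.trans k.zero_le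
  · obtain ⟨j, -, hij⟩ := hα.exists_adj_add_eq hi
    exact (Nat.le_add_right _ _).trans_eq hij

theorem add_eq_of_isRightEdge (hα : IsBasicCover G k α) (hij : IsRightEdge G i j) :
    α i + α j = k := by
  refine le_antisymm ?_ (hα.1 hij.1)
  rcases (α i).eq_zero_or_pos with hi | hi
  · simpa only [hi, zero_add] using hα.apply_le j
  rcases (α j).eq_zero_or_pos with hj | hj
  · simpa only [hj, add_zero] using hα.apply_le i
  obtain ⟨i', hii', hi'⟩ := hα.exists_adj_add_eq hi
  obtain ⟨j', hjj', hj'⟩ := hα.exists_adj_add_eq hj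
  have hcover : k ≤ α i' + α j' := hα.1 (hij.2 i' j' hii' hjj')
  omega

theorem eq_of_isRightEdge (hα : IsBasicCover G k α) (hi : IsRightEdge G i j)
    (hi' : IsRightEdge G i' j) : α i = α i' :=
  Nat.add_right_cancel <|
    (hα.add_eq_of_isRightEdge hi).trans (hα.add_eq_of_isRightEdge hi').symm

end IsBasicCover

end

/-- Let `A₀`, `B₀` be disjoint nonempty vertex sets such that every pair
`{a,b}` with `a ∈ A₀`, `b ∈ B₀` is a right edge of `G`.  Then for every `k ≥ 1`, every basic
`k`-cover of `G` is constant on `A₀` and constant on `B₀`. -/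
theorem basicCover_const_on_rightComplete {n : ℕ} (G : SimpleGraph (Fin n))
    (A₀ B₀ : Finset (Fin n)) (hdisj : Disjoint A₀ B₀)
    (hA : A₀.Nonempty) (hB : B₀.Nonempty)
    (hright : ∀ a ∈ A₀, ∀ b ∈ B₀, IsRightEdge G a b) :
    ∀ k : ℕ, 1 ≤ k → ∀ α : Fin n → ℕ, IsBasicCover G k α →
      (∀ a ∈ A₀, ∀ a' ∈ A₀, α a = α a') ∧ (∀ b ∈ B₀, ∀ b' ∈ B₀, α b = α b') := by
  intro k _ α hα
  obtain ⟨a₀, ha₀⟩ := hA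
  obtain ⟨b₀, hb₀⟩ := hB
  constructor
  · intro a ha a' ha'
    exact hα.eq_of_isRightEdge (hright a ha b₀ hb₀) (hright a' ha' b₀ hb₀)
  · intro b hb b' hb'
    exact hα.eq_of_isRightEdge (hright a₀ ha₀ b hb).symm (hright a₀ ha₀ b' hb').symm
end

section
/- Let G be a graph satisfying the weak square condition (WSC) which has a unique perfect matching M. Then every edge of M is a right edge of G. -/
/-!
Let `M` be a perfect matching and `{i, w}` a right edge, and let `j` and `k` be the partners of
`i` and `w` in `M`. The square condition makes `{j, k}` an edge of `G`, so exchanging the names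
`j` and `w` turns `M` into a perfect matching of `G` that contains `{i, w}`. When the perfect
matching is unique, it therefore contains every right edge; a right edge at `i` is then the
matching edge at `i`.
-/

/-- A right edge of a graph on an arbitrary, possibly infinite, vertex type; on `Fin n` this is
definitionally `IsRightEdge`. -/
def IsRightAdj {V : Type*} (G : SimpleGraph V) (i j : V) : Prop :=
  G.Adj i j ∧ ∀ i' j' : V, G.Adj i i' → G.Adj j j' → G.Adj i' j'

section

open SimpleGraph

variable {V : Type*} {G : SimpleGraph V} {M : G.Subgraph} {i j w k : V}

theorem isPerfectMatching_map_of_bijective {W : Type*} {H : SimpleGraph W}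
    (hM : M.IsPerfectMatching) (f : G →g H) (hf : Function.Bijective f) :
    (M.map f).IsPerfectMatching := by
  refine ⟨hM.1.map f hf.injective, fun v => ?_⟩
  obtain ⟨u, rfl⟩ := hf.surjective v
  exact Set.mem_image_of_mem f (hM.2 u)

theorem isPerfectMatching_top_spanningCoe (hM : M.IsPerfectMatching) :
    (⊤ : M.spanningCoe.Subgraph).IsPerfectMatching := by
  simpa only [Subgraph.isPerfectMatching_iff, Subgraph.top_adj, Subgraph.spanningCoe_adj] using hM

theorem adj_swap_of_isMatching [DecidableEq V] (hM : M.IsMatching) (hij : M.Adj i j)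
    (hwk : M.Adj w k) (hiw : G.Adj i w) (hjk : G.Adj j k) {a b : V} (hab : M.Adj a b) :
    G.Adj (Equiv.swap j w a) (Equiv.swap j w b) := by
  have adj_of_moved : ∀ {a b : V}, M.Adj a b → a = j ∨ a = w →
      G.Adj (Equiv.swap j w a) (Equiv.swap j w b) := by
    rintro a b hab (rfl | rfl)
    · obtain rfl : i = b := hM.eq_of_adj_left hij.symm hab
      rw [Equiv.swap_apply_left, Equiv.swap_apply_of_ne_of_ne hij.ne hiw.ne]
      exact hiw.symm
    · obtain rfl : k = b := hM.eq_of_adj_left hwk hab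
      rw [Equiv.swap_apply_right, Equiv.swap_apply_of_ne_of_ne hjk.ne' hwk.ne.symm]
      exact hjk
  by_cases ha : a = j ∨ a = w
  · exact adj_of_moved hab ha
  by_cases hb : b = j ∨ b = w
  · exact (adj_of_moved hab.symm hb).symm
  rw [not_or] at ha hb
  rw [Equiv.swap_apply_of_ne_of_ne ha.1 ha.2, Equiv.swap_apply_of_ne_of_ne hb.1 hb.2]
  exact hab.adj_sub

theorem exists_isPerfectMatching_adj_of_square (hM : M.IsPerfectMatching) (hij : M.Adj i j)
    (hwk : M.Adj w k) (hiw : G.Adj i w) (hjk : G.Adj j k) :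
    ∃ M' : G.Subgraph, M'.IsPerfectMatching ∧ M'.Adj i w := by
  classical
  let f : M.spanningCoe →g G :=
    ⟨Equiv.swap j w, adj_swap_of_isMatching hM.1 hij hwk hiw hjk⟩
  have f_i : f i = i := Equiv.swap_apply_of_ne_of_ne hij.ne hiw.ne
  have f_j : f j = w := Equiv.swap_apply_left j w
  exact ⟨Subgraph.map f ⊤,
    isPerfectMatching_map_of_bijective (isPerfectMatching_top_spanningCoe hM) f
      (Equiv.swap j w).bijective,
    i, j, hij, f_i, f_j⟩

theorem IsRightAdj.exists_isPerfectMatching_adj (hiw : IsRightAdj G i w)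
    (hM : M.IsPerfectMatching) : ∃ M' : G.Subgraph, M'.IsPerfectMatching ∧ M'.Adj i w := by
  obtain ⟨j, hij, -⟩ := Subgraph.isPerfectMatching_iff.1 hM i
  obtain ⟨k, hwk, -⟩ := Subgraph.isPerfectMatching_iff.1 hM w
  exact exists_isPerfectMatching_adj_of_square hM hij hwk hiw.1
    (hiw.2 j k hij.adj_sub hwk.adj_sub)

end

theorem unique_perfect_matching_right_edges_general {V : Type*} (G : SimpleGraph V)
    (hWSC : ∀ v : V, ∃ w : V, IsRightAdj G v w)
    (M : G.Subgraph) (hM : M.IsPerfectMatching)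
    (huniq : ∀ M' : G.Subgraph, M'.IsPerfectMatching → M' = M) :
    ∀ i j : V, M.Adj i j → IsRightAdj G i j := by
  intro i j hij
  obtain ⟨w, hiw⟩ := hWSC i
  obtain ⟨M', hM', hiw'⟩ := hiw.exists_isPerfectMatching_adj hM
  obtain rfl : M' = M := huniq M' hM'
  obtain rfl : j = w := hM.1.eq_of_adj_left hij hiw'
  exact hiw

/-- Let `G` be a graph satisfying the weak square condition (every vertex
lies in a right edge) which has a unique perfect matching `M`. Then every edge of `M` is a
right edge of `G`. -/
theorem unique_perfect_matching_right_edges {n : ℕ} (G : SimpleGraph (Fin n))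
    (hWSC : ∀ v : Fin n, ∃ w : Fin n, IsRightEdge G v w)
    (M : G.Subgraph) (hM : M.IsPerfectMatching)
    (huniq : ∀ M' : G.Subgraph, M'.IsPerfectMatching → M' = M) :
    ∀ i j : Fin n, M.Adj i j → IsRightEdge G i j :=
  unique_perfect_matching_right_edges_general G hWSC M hM huniq
end

section
/- Let G be a bipartite graph with bipartition V=A∪B, |A|≤|B|, such that the rank of the poset P(G) of basic 1-covers equals |A|. If P(G) is pure (all maximal chains have the same length), then P(G) is locally upper semimodular: whenever two elements α and β of P(G) both cover an element γ and α,β ≤ δ for some δ∈P(G), there exists ε∈P(G) with ε≤δ which covers both α and β. -/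
/-- The partial order on basic 1-covers of a bipartite graph with parts `A` and `Aᶜ`. -/
def pLe {n : ℕ} (A : Finset (Fin n)) (α β : Fin n → ℕ) : Prop :=
  ∀ a ∈ A, α a ≤ β a

/-- The strict order on `P(G)`. -/
def pLt {n : ℕ} (A : Finset (Fin n)) (α β : Fin n → ℕ) : Prop :=
  pLe A α β ∧ ¬ pLe A β α

/-- `β` covers `α` in the poset `P(G)` of basic 1-covers. -/
def PCovBy {n : ℕ} (G : SimpleGraph (Fin n)) (A : Finset (Fin n)) (α β : Fin n → ℕ) : Prop :=
  pLt A α β ∧ ∀ γ : Fin n → ℕ, IsBasicCover G 1 γ → ¬ (pLt A α γ ∧ pLt A γ β)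

/-- A strict `d`-step chain of basic 1-covers in `P(G)`. -/
def IsPChain {n : ℕ} (G : SimpleGraph (Fin n)) (A : Finset (Fin n)) (d : ℕ)
    (c : Fin (d + 1) → (Fin n → ℕ)) : Prop :=
  (∀ i, IsBasicCover G 1 (c i)) ∧ ∀ i : Fin d, pLt A (c i.castSucc) (c i.succ)

/-- The rank of the poset `P(G)`: the maximal number of covering steps in a chain. -/
noncomputable def posetRank {n : ℕ} (G : SimpleGraph (Fin n)) (A : Finset (Fin n)) : ℕ :=
  sSup {d : ℕ | ∃ c : Fin (d + 1) → (Fin n → ℕ), IsPChain G A d c}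

/-- A maximal chain in `P(G)`: a saturated chain which cannot be extended at either end. -/
def IsMaximalPChain {n : ℕ} (G : SimpleGraph (Fin n)) (A : Finset (Fin n)) (d : ℕ)
    (c : Fin (d + 1) → (Fin n → ℕ)) : Prop :=
  (∀ i, IsBasicCover G 1 (c i)) ∧
  (∀ i : Fin d, PCovBy G A (c i.castSucc) (c i.succ)) ∧
  (∀ γ : Fin n → ℕ, IsBasicCover G 1 γ → ¬ pLt A γ (c 0)) ∧
  (∀ γ : Fin n → ℕ, IsBasicCover G 1 γ → ¬ pLt A (c (Fin.last d)) γ)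

/-- `P(G)` is pure: all maximal chains have the same length (the rank). -/
def PosetIsPure {n : ℕ} (G : SimpleGraph (Fin n)) (A : Finset (Fin n)) : Prop :=
  ∀ d : ℕ, ∀ c : Fin (d + 1) → (Fin n → ℕ), IsMaximalPChain G A d c → d = posetRank G A

/-!
Basic 1-covers take values in `{0, 1}`, so the weight `∑ a ∈ A, α a`, which is strictly monotone on
`P(G)`, is bounded by `|A|`. When every maximal chain has `|A|` steps, the weight has no room to
skip a value: each covering relation raises it by exactly one. The join of two basic covers is their
pointwise maximum on `A`, which makes the weight submodular, so joining two distinct upper covers of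
`γ` raises the weight of each of them by at most one.
-/

section Order

/-- Saturated finite chains of a preorder; `length` counts the covering steps. -/
abbrev CovBySeries (P : Type*) [Preorder P] := RelSeries {(x, y) : P × P | x ⋖ y}

variable {P : Type*}

lemma CovBySeries.apply_head_add_length_le [Preorder P] {w : P → ℕ} (hw : StrictMono w)
    (s : CovBySeries P) : w s.head + s.length ≤ w s.last :=
  LTSeries.head_add_length_le_nat (LTSeries.map (s.ofLE fun _ h ↦ CovBy.lt h) w hw)

section PartialOrder

variable [PartialOrder P]

lemma exists_covBySeries_of_le [WellFoundedLT P] [WellFoundedGT P] {x y : P} (h : x ≤ y) :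
    ∃ s : CovBySeries P, s.head = x ∧ s.last = y := by
  obtain ⟨a, hx, m, hy, ha⟩ := exists_covBy_seq_of_wellFoundedLT_wellFoundedGT_of_le h
  exact ⟨⟨m, fun i ↦ a i, fun i ↦ ha i i.2⟩, hx, hy⟩

lemma exists_covBySeries_head_isMin [WellFoundedLT P] [WellFoundedGT P] (x : P) :
    ∃ s : CovBySeries P, IsMin s.head ∧ s.last = x := by
  obtain ⟨m, hmx, hm⟩ := exists_minimal_le_of_wellFoundedLT (fun _ : P ↦ True) x trivial
  obtain ⟨s, rfl, hx⟩ := exists_covBySeries_of_le hmx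
  exact ⟨s, minimal_true.1 hm, hx⟩

lemma exists_covBySeries_last_isMax [WellFoundedLT P] [WellFoundedGT P] (x : P) :
    ∃ s : CovBySeries P, s.head = x ∧ IsMax s.last := by
  obtain ⟨m, hxm, hm⟩ := exists_maximal_ge_of_wellFoundedGT (fun _ : P ↦ True) x trivial
  obtain ⟨s, hx, rfl⟩ := exists_covBySeries_of_le hxm
  exact ⟨s, hx, maximal_true.1 hm⟩

-- Extend `x ⋖ y` to a maximal chain: the part below `x` makes `w x` large, the part above `y`
-- makes `w y` small.
lemma apply_eq_add_one_of_covBy {w : P → ℕ} {N : ℕ} (hw : StrictMono w) (hN : ∀ x, w x ≤ N)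
    (hlen : ∀ s : CovBySeries P, IsMin s.head → IsMax s.last → N ≤ s.length)
    {x y : P} (hxy : x ⋖ y) : w y = w x + 1 := by
  have : WellFoundedLT P := hw.wellFoundedLT
  have : WellFoundedGT P := StrictMono.wellFoundedGT (β := Fin (N + 1))
    (f := fun x ↦ ⟨w x, Nat.lt_succ_of_le (hN x)⟩) fun _ _ h ↦ hw h
  obtain ⟨s, hs, rfl⟩ := exists_covBySeries_head_isMin x
  obtain ⟨t, rfl, ht⟩ := exists_covBySeries_last_isMax y
  have hlength : N ≤ s.length + t.length + 1 :=
    hlen (s.append t hxy) (by rwa [s.head_append]) (by rwa [s.last_append])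
  have hs_le := CovBySeries.apply_head_add_length_le hw s
  have ht_le := CovBySeries.apply_head_add_length_le hw t
  have hlt := hw hxy.lt
  have hmax := hN t.last
  omega

end PartialOrder

lemma covBy_sup_of_submodular [SemilatticeSup P] {w : P → ℕ} (hw : StrictMono w)
    {x y z : P} (hsub : w (x ⊔ y) + w z ≤ w x + w y) (hy : w y ≤ w z + 1)
    (hzx : z ⋖ x) (hzy : z ⋖ y) (hxy : x ≠ y) : x ⋖ x ⊔ y := by
  have hyx : ¬ y ≤ x := fun h ↦ (hzx.eq_or_eq hzy.le h).elim hzy.ne' hxy.symm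
  refine ⟨left_lt_sup.2 hyx, fun u hxu hu ↦ ?_⟩
  have := hw hxu
  have := hw hu
  omega

end Order

section BasicCover

variable {n : ℕ} {G : SimpleGraph (Fin n)} {α : Fin n → ℕ}

lemma IsBasicCover.le_one (hα : IsBasicCover G 1 α) (v : Fin n) : α v ≤ 1 := by
  have hcover : IsCover G 1 (α ⊓ 1) := fun i j hij ↦ by
    have := hα.1 hij
    simp only [Pi.inf_apply, Pi.one_apply]
    omega
  exact inf_eq_left.1 (hα.2 _ inf_le_left hcover) v

lemma IsBasicCover.eq_zero_iff (hα : IsBasicCover G 1 α) (v : Fin n) :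
    α v = 0 ↔ ∀ w, G.Adj v w → α w ≠ 0 := by
  refine ⟨fun hv w hvw ↦ ?_, fun hv ↦ ?_⟩
  · have := hα.1 hvw
    omega
  · have hcover : IsCover G 1 (Function.update α v 0) := fun i j hij ↦ by
      have := hα.1 hij
      rcases eq_or_ne i v with rfl | hi
      · have := hv j hij
        rw [Function.update_of_ne hij.ne']
        omega
      rcases eq_or_ne j v with rfl | hj
      · have := hv i hij.symm
        rw [Function.update_of_ne hi]
        omega
      · rwa [Function.update_of_ne hi, Function.update_of_ne hj]
    have hle : Function.update α v 0 ≤ α := update_le_self_iff.2 (Nat.zero_le _)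
    rw [← hα.2 _ hle hcover, Function.update_self]

lemma IsBasicCover.exists_adj_forall_adj_ne_zero (hα : IsBasicCover G 1 α) {v : Fin n}
    (hv : α v ≠ 0) : ∃ w, G.Adj v w ∧ ∀ u, G.Adj w u → α u ≠ 0 := by
  obtain ⟨w, hvw, hw⟩ : ∃ w, G.Adj v w ∧ α w = 0 := by
    rw [Ne, hα.eq_zero_iff] at hv
    simpa only [not_forall, not_not, exists_prop] using hv
  exact ⟨w, hvw, (hα.eq_zero_iff w).1 hw⟩

lemma isBasicCover_one_iff : IsBasicCover G 1 α ↔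
    (∀ v, α v ≤ 1) ∧ ∀ v, α v = 0 ↔ ∀ w, G.Adj v w → α w ≠ 0 := by
  refine ⟨fun hα ↦ ⟨hα.le_one, hα.eq_zero_iff⟩, fun ⟨hle, hzero⟩ ↦ ⟨fun i j hij ↦ ?_, ?_⟩⟩
  · by_cases hi : α i = 0
    · have := (hzero i).1 hi j hij
      omega
    · omega
  · refine fun β hβα hβ ↦ le_antisymm hβα fun v ↦ ?_
    by_cases hv : α v = 0
    · exact hv ▸ Nat.zero_le _
    · obtain ⟨w, hvw, hw⟩ : ∃ w, G.Adj v w ∧ α w = 0 := by simpa [hzero v] using hv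
      have hβw : β w ≤ 0 := hw ▸ hβα w
      have hβv : 1 ≤ β v + β w := hβ hvw
      exact (hle v).trans (by omega)

end BasicCover

section Bipartite

variable {n : ℕ} {G : SimpleGraph (Fin n)} {A : Finset (Fin n)} {α β f : Fin n → ℕ}
  (hbip : ∀ i j : Fin n, G.Adj i j → (i ∈ A ↔ j ∉ A))

include hbip in
lemma IsBasicCover.eq_of_eqOn (hα : IsBasicCover G 1 α) (hβ : IsBasicCover G 1 β)
    (h : ∀ a ∈ A, α a = β a) : α = β := by
  funext v
  by_cases hv : v ∈ A
  · exact h v hv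
  · have hzero : α v = 0 ↔ β v = 0 := by
      rw [hα.eq_zero_iff, hβ.eq_zero_iff]
      refine forall₂_congr fun w hvw ↦ ?_
      rw [h w ((hbip w v hvw.symm).2 hv)]
    have := hα.le_one v
    have := hβ.le_one v
    omega

open Classical in
/-- The smallest extension of the values of `f` on `A` to a 1-cover, for a graph all of whose edges
join `A` to its complement. -/
noncomputable def tightExtension (G : SimpleGraph (Fin n)) (A : Finset (Fin n)) (f : Fin n → ℕ) :
    Fin n → ℕ :=
  fun v ↦ if v ∈ A then f v else if ∃ a, G.Adj v a ∧ f a = 0 then 1 else 0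

lemma tightExtension_of_mem {v : Fin n} (hv : v ∈ A) : tightExtension G A f v = f v :=
  if_pos hv

lemma tightExtension_of_notMem_eq_zero_iff {v : Fin n} (hv : v ∉ A) :
    tightExtension G A f v = 0 ↔ ∀ a, G.Adj v a → f a ≠ 0 := by
  simp [tightExtension, hv]

include hbip in
lemma isBasicCover_tightExtension (hle : ∀ a ∈ A, f a ≤ 1)
    (hf : ∀ a ∈ A, f a ≠ 0 → ∃ b, G.Adj a b ∧ ∀ c, G.Adj b c → f c ≠ 0) :
    IsBasicCover G 1 (tightExtension G A f) := by
  refine isBasicCover_one_iff.2 ⟨fun v ↦ ?_, fun v ↦ ?_⟩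
  · unfold tightExtension
    split_ifs with hv
    exacts [hle v hv, le_rfl, zero_le_one]
  · by_cases hv : v ∈ A
    · rw [tightExtension_of_mem hv]
      refine ⟨fun hzero b hvb hb ↦ ?_, fun hnonzero ↦ ?_⟩
      · exact (tightExtension_of_notMem_eq_zero_iff ((hbip v b hvb).1 hv)).1 hb v hvb.symm hzero
      · by_contra hfv
        obtain ⟨b, hvb, hb⟩ := hf v hv hfv
        exact hnonzero b hvb
          ((tightExtension_of_notMem_eq_zero_iff ((hbip v b hvb).1 hv)).2 hb)
    · rw [tightExtension_of_notMem_eq_zero_iff hv]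
      refine forall₂_congr fun a hva ↦ ?_
      rw [tightExtension_of_mem ((hbip a v hva.symm).2 hv)]

include hbip in
lemma IsBasicCover.tightExtension_sup (hα : IsBasicCover G 1 α) (hβ : IsBasicCover G 1 β) :
    IsBasicCover G 1 (tightExtension G A (α ⊔ β)) := by
  refine isBasicCover_tightExtension hbip (fun a _ ↦ sup_le (hα.le_one a) (hβ.le_one a))
    fun a _ ha ↦ ?_
  have hsup : ∀ v, (α ⊔ β) v ≠ 0 ↔ α v ≠ 0 ∨ β v ≠ 0 := fun v ↦ by
    simp only [Pi.sup_apply]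
    omega
  rcases (hsup a).1 ha with hαa | hβa
  · obtain ⟨b, hab, hb⟩ := hα.exists_adj_forall_adj_ne_zero hαa
    exact ⟨b, hab, fun c hbc ↦ (hsup c).2 (.inl (hb c hbc))⟩
  · obtain ⟨b, hab, hb⟩ := hβ.exists_adj_forall_adj_ne_zero hβa
    exact ⟨b, hab, fun c hbc ↦ (hsup c).2 (.inr (hb c hbc))⟩

/-- The poset `P(G)`. The bipartition is a phantom argument, so that instances can use it: it makes
`pLe A` antisymmetric and provides joins. -/
def BasicCoverPoset (_hbip : ∀ i j : Fin n, G.Adj i j → (i ∈ A ↔ j ∉ A)) : Type :=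
  {α : Fin n → ℕ // IsBasicCover G 1 α}

namespace BasicCoverPoset

variable {hbip}

instance : PartialOrder (BasicCoverPoset hbip) where
  le x y := pLe A x.1 y.1
  lt x y := pLt A x.1 y.1
  le_refl _ _ _ := le_rfl
  le_trans _ _ _ hxy hyz a ha := (hxy a ha).trans (hyz a ha)
  lt_iff_le_not_ge _ _ := Iff.rfl
  le_antisymm x y hxy hyx :=
    Subtype.ext (x.2.eq_of_eqOn hbip y.2 fun a ha ↦ (hxy a ha).antisymm (hyx a ha))

lemma covBy_iff {x y : BasicCoverPoset hbip} : x ⋖ y ↔ PCovBy G A x.1 y.1 :=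
  and_congr Iff.rfl
    ⟨fun h γ hγ hbetween ↦ h (c := ⟨γ, hγ⟩) hbetween.1 hbetween.2,
      fun h z hxz hzy ↦ h z.1 z.2 ⟨hxz, hzy⟩⟩

noncomputable instance : SemilatticeSup (BasicCoverPoset hbip) where
  sup x y := ⟨tightExtension G A (x.1 ⊔ y.1), x.2.tightExtension_sup hbip y.2⟩
  le_sup_left x y _ ha :=
    le_sup_left.trans_eq (tightExtension_of_mem (f := x.1 ⊔ y.1) ha).symm
  le_sup_right x y _ ha :=
    le_sup_right.trans_eq (tightExtension_of_mem (f := x.1 ⊔ y.1) ha).symm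
  sup_le x y _ hxz hyz a ha :=
    (tightExtension_of_mem (f := x.1 ⊔ y.1) ha).trans_le (sup_le (hxz a ha) (hyz a ha))

lemma sup_apply_of_mem (x y : BasicCoverPoset hbip) {a : Fin n} (ha : a ∈ A) :
    (x ⊔ y).1 a = x.1 a ⊔ y.1 a :=
  tightExtension_of_mem (f := x.1 ⊔ y.1) ha

/-- The number of vertices of `A` in a basic 1-cover, which turns out to be the rank function of a
pure `P(G)` of rank `|A|`. -/
def weight (x : BasicCoverPoset hbip) : ℕ :=
  ∑ a ∈ A, x.1 a

lemma weight_strictMono : StrictMono (weight (hbip := hbip)) := by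
  rintro x y ⟨hle, hnot⟩
  obtain ⟨a, ha, hlt⟩ : ∃ a ∈ A, x.1 a < y.1 a := by simpa [pLe] using hnot
  exact Finset.sum_lt_sum hle ⟨a, ha, hlt⟩

lemma weight_le_card (x : BasicCoverPoset hbip) : x.weight ≤ A.card := by
  simpa [weight] using Finset.sum_le_card_nsmul A x.1 1 fun a _ ↦ x.2.le_one a

lemma weight_sup_add_le {x y z : BasicCoverPoset hbip} (hzx : z ≤ x) (hzy : z ≤ y) :
    (x ⊔ y).weight + z.weight ≤ x.weight + y.weight := by
  simp only [weight, ← Finset.sum_add_distrib]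
  refine Finset.sum_le_sum fun a ha ↦ ?_
  calc (x ⊔ y).1 a + z.1 a ≤ x.1 a ⊔ y.1 a + x.1 a ⊓ y.1 a := by
        rw [sup_apply_of_mem x y ha]
        exact Nat.add_le_add_left (le_inf (hzx a ha) (hzy a ha)) _
    _ = x.1 a + y.1 a := max_add_min _ _

lemma length_eq_posetRank (hpure : PosetIsPure G A) (s : CovBySeries (BasicCoverPoset hbip))
    (hmin : IsMin s.head) (hmax : IsMax s.last) : s.length = posetRank G A :=
  hpure s.length (fun i ↦ (s i).1) ⟨fun i ↦ (s i).2, fun i ↦ covBy_iff.1 (s.step i),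
    fun γ hγ ↦ hmin.not_lt (b := ⟨γ, hγ⟩), fun γ hγ ↦ hmax.not_lt (b := ⟨γ, hγ⟩)⟩

lemma weight_eq_add_one_of_covBy (hrank : posetRank G A = A.card) (hpure : PosetIsPure G A)
    {x y : BasicCoverPoset hbip} (hxy : x ⋖ y) : y.weight = x.weight + 1 :=
  apply_eq_add_one_of_covBy weight_strictMono weight_le_card
    (fun s hmin hmax ↦ (hrank ▸ length_eq_posetRank hpure s hmin hmax).ge) hxy

lemma covBy_sup (hrank : posetRank G A = A.card) (hpure : PosetIsPure G A)
    {x y z : BasicCoverPoset hbip} (hzx : z ⋖ x) (hzy : z ⋖ y) (hxy : x ≠ y) : x ⋖ x ⊔ y :=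
  covBy_sup_of_submodular weight_strictMono (weight_sup_add_le hzx.le hzy.le)
    (weight_eq_add_one_of_covBy hrank hpure hzy).le hzx hzy hxy

end BasicCoverPoset

end Bipartite

/-- Let `G` be bipartite with bipartition `A ∪ Aᶜ`, `|A| ≤ |Aᶜ|`, such
that the rank of `P(G)` equals `|A|`.  If `P(G)` is pure, then `P(G)` is locally upper
semimodular: whenever distinct `α`, `β` cover `γ` and `α, β < δ` in `P(G)`, there is
`ε ≤ δ` in `P(G)` covering both `α` and `β`. -/
theorem pure_implies_locally_upper_semimodular {n : ℕ} (G : SimpleGraph (Fin n))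
    (A : Finset (Fin n))
    (hbip : ∀ i j : Fin n, G.Adj i j → (i ∈ A ↔ j ∉ A))
    (hcard : A.card ≤ Aᶜ.card)
    (hiso : ∀ v : Fin n, ∃ w, G.Adj v w)
    (hrank : posetRank G A = A.card)
    (hpure : PosetIsPure G A) :
    ∀ α β γ δ : Fin n → ℕ, IsBasicCover G 1 α → IsBasicCover G 1 β →
      IsBasicCover G 1 γ → IsBasicCover G 1 δ → α ≠ β →
      PCovBy G A γ α → PCovBy G A γ β → pLt A α δ → pLt A β δ →
      ∃ ε : Fin n → ℕ, IsBasicCover G 1 ε ∧ pLe A ε δ ∧ PCovBy G A α ε ∧ PCovBy G A β ε := by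
  intro α β γ δ hα hβ hγ hδ hne hγα hγβ hαδ hβδ
  let x : BasicCoverPoset hbip := ⟨α, hα⟩
  let y : BasicCoverPoset hbip := ⟨β, hβ⟩
  let z : BasicCoverPoset hbip := ⟨γ, hγ⟩
  let d : BasicCoverPoset hbip := ⟨δ, hδ⟩
  have hxy : x ≠ y := fun h ↦ hne (congrArg Subtype.val h)
  have hzx : z ⋖ x := BasicCoverPoset.covBy_iff.2 hγα
  have hzy : z ⋖ y := BasicCoverPoset.covBy_iff.2 hγβ
  have hle : x ⊔ y ≤ d := sup_le hαδ.1 hβδ.1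
  have hx : x ⋖ x ⊔ y := BasicCoverPoset.covBy_sup hrank hpure hzx hzy hxy
  have hy : y ⋖ x ⊔ y := sup_comm y x ▸ BasicCoverPoset.covBy_sup hrank hpure hzy hzx hxy.symm
  exact ⟨(x ⊔ y).1, (x ⊔ y).2, hle, BasicCoverPoset.covBy_iff.1 hx, BasicCoverPoset.covBy_iff.1 hy⟩
end
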